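/- Let T_D be shifted exponential with rate λ_d > 0, shift c ≥ 0, independent of T_N(K) (K-th order statistic of N i.i.d. shifted exponentials with rate λ_s, shift c). Conditioning on the event {T_N(K) ≤ T_D}, the conditional density of T_N(K) at t > c is proportional to Σ_{j=0}^{K-1} B_{K,j}·λ_s·e^{-H_{K,j}(t-c)} (normalized by R_K = P(T_N(K) ≤ T_D)), and the conditional first moment is E[T_N(K) | T_N(K) ≤ T_D] = (1/R_K)·Σ_{j=0}^{K-1} B_{K,j}·λ_s·(c·H_{K,j} + 1)/H_{K,j}², where B_{K,j} = K·binom(N,K)·binom(K-1,j)·(-1)^j and H_{K,j} = λ_s(N-K+1+j) + λ_d. -/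

import Mathlib

open MeasureTheory ProbabilityTheory Real

/-- The shifted exponential distribution with rate `l` and shift `c`:
density `l * exp (-l*(t-c))` for `t > c`, `0` otherwise. -/
noncomputable def shiftedExp (l c : ℝ) : MeasureTheory.Measure ℝ :=
  MeasureTheory.volume.withDensity
    (fun t => ENNReal.ofReal (if c < t then l * Real.exp (-l * (t - c)) else 0))

/-- The `K`-th order statistic (K-th smallest value) of the family `T` evaluated at `ω`. -/
noncomputable def orderStat {Ω : Type*} {N : ℕ} (T : Fin N → Ω → ℝ) (K : ℕ) (ω : Ω) : ℝ :=
  sInf {x : ℝ | K ≤ Nat.card {i : Fin N // T i ω ≤ x}}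

section

open Set Filter Topology
theorem orderStat_le_iff {Ω : Type*} {N : ℕ} (T : Fin N → Ω → ℝ) {K : ℕ} (hK : 1 ≤ K)
    (hKN : K ≤ N) (ω : Ω) (x : ℝ) :
    orderStat T K ω ≤ x ↔ K ≤ Nat.card {i : Fin N // T i ω ≤ x} := by
  have mono : ∀ a b : ℝ, a ≤ b →
      Nat.card {i : Fin N // T i ω ≤ a} ≤ Nat.card {i : Fin N // T i ω ≤ b} := fun a b hab =>
    Nat.card_le_card_of_injective (fun i => ⟨i.1, i.2.trans hab⟩)
      fun i j hij => Subtype.ext (by simpa using hij)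
  have bdd : BddBelow {x : ℝ | K ≤ Nat.card {i : Fin N // T i ω ≤ x}} := by
    obtain ⟨m, hm⟩ := (Set.finite_range fun i => T i ω).bddBelow
    refine ⟨m, fun y hy => ?_⟩
    have : 0 < Nat.card {i : Fin N // T i ω ≤ y} := lt_of_lt_of_le hK hy
    obtain ⟨⟨i, hi⟩⟩ := (Nat.card_pos_iff.1 this).1
    exact (hm ⟨i, rfl⟩).trans hi
  have ne : {x : ℝ | K ≤ Nat.card {i : Fin N // T i ω ≤ x}}.Nonempty := by
    obtain ⟨m, hm⟩ := (Set.finite_range fun i => T i ω).bddAbove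
    refine ⟨m, ?_⟩
    have : ∀ i, T i ω ≤ m := fun i => hm ⟨i, rfl⟩
    simpa [this] using hKN
  refine ⟨fun h => ?_, fun h => csInf_le bdd h⟩
  have key : ∀ᶠ y in 𝓝[>] x, ∀ i, T i ω ≤ y → T i ω ≤ x := by
    refine eventually_all.2 fun i => ?_
    rcases le_or_gt (T i ω) x with hi | hi
    · exact Eventually.of_forall fun _ _ => hi
    · filter_upwards [nhdsWithin_le_nhds (Iio_mem_nhds hi)] with y hy h'
      exact absurd h' (not_le.2 hy)
  obtain ⟨y, hy, hxy⟩ := (key.and self_mem_nhdsWithin).exists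
  obtain ⟨z, hz, hzy⟩ := exists_lt_of_csInf_lt ne (lt_of_le_of_lt h hxy)
  exact (hz.trans (mono z y hzy.le)).trans (Nat.card_le_card_of_injective
    (fun i : {i : Fin N // T i ω ≤ y} => (⟨i.1, hy i.1 i.2⟩ : {i : Fin N // T i ω ≤ x}))
      fun i j hij => Subtype.ext (by simpa using hij))

theorem setOf_le_card_mem_eq_biUnion {N : ℕ} (K : ℕ) (A : Set ℝ) :
    {f : Fin N → ℝ | K ≤ Nat.card {i // f i ∈ A}}
      = ⋃ s ∈ (Finset.univ : Finset (Finset (Fin N))).filter (fun s => K ≤ s.card),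
          Set.pi univ fun i => if i ∈ s then A else Aᶜ := by
  classical
  ext f
  simp only [mem_ofPred_eq, mem_iUnion, Finset.mem_filter, Finset.mem_univ, true_and,
    Set.mem_pi, exists_prop]
  constructor
  · intro h
    refine ⟨Finset.univ.filter fun i => f i ∈ A, ?_, fun i => ?_⟩
    · rwa [Nat.card_eq_fintype_card, Fintype.card_subtype] at h
    · by_cases hi : f i ∈ A <;> simp [hi]
  · rintro ⟨s, hs, hf⟩
    have : s = Finset.univ.filter fun i => f i ∈ A := by
      ext i
      have := hf i
      by_cases hi : i ∈ s <;> simp_all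
    rwa [Nat.card_eq_fintype_card, Fintype.card_subtype, ← this]

theorem measurableSet_le_card_mem {N : ℕ} (K : ℕ) {A : Set ℝ} (hA : MeasurableSet A) :
    MeasurableSet {f : Fin N → ℝ | K ≤ Nat.card {i // f i ∈ A}} := by
  rw [setOf_le_card_mem_eq_biUnion]
  refine Finset.measurableSet_biUnion _ fun s _ => MeasurableSet.univ_pi fun i => ?_
  split_ifs
  exacts [hA, hA.compl]

theorem pi_le_card_mem {N : ℕ} (K : ℕ) (μ : Measure ℝ) [SigmaFinite μ] {A : Set ℝ}
    (hA : MeasurableSet A) :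
    Measure.pi (fun _ : Fin N => μ) {f : Fin N → ℝ | K ≤ Nat.card {i // f i ∈ A}}
      = ∑ m ∈ Finset.Ico K (N + 1), N.choose m * (μ A ^ m * μ Aᶜ ^ (N - m)) := by
  classical
  rw [setOf_le_card_mem_eq_biUnion, measure_biUnion_finset]
  · have h1 : ∀ s : Finset (Fin N), Measure.pi (fun _ : Fin N => μ)
        (Set.pi univ fun i => if i ∈ s then A else Aᶜ) = μ A ^ s.card * μ Aᶜ ^ (N - s.card) := by
      intro s
      rw [Measure.pi_pi]
      simp_rw [apply_ite μ]
      rw [Finset.prod_ite]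
      simp [Finset.filter_not, Finset.card_sdiff]
    simp_rw [h1]
    rw [Finset.sum_filter, ← Finset.powerset_univ,
      Finset.sum_powerset_apply_card
        (fun m => if K ≤ m then μ A ^ m * μ Aᶜ ^ (N - m) else 0)]
    simp only [Finset.card_univ, Fintype.card_fin, nsmul_eq_mul, mul_ite, mul_zero]
    rw [← Finset.sum_filter]
    congr 1
    ext m
    simp
    omega
  · intro s _ t _ hst
    refine Set.disjoint_left.2 fun f hs ht => hst ?_
    ext i
    have hs := hs i (mem_univ i)
    have ht := ht i (mem_univ i)
    by_cases h1 : i ∈ s <;> by_cases h2 : i ∈ t <;> simp_all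
  · intro s _
    refine MeasurableSet.univ_pi fun i => ?_
    split_ifs
    exacts [hA, hA.compl]

theorem hasDerivAt_binomial_tail {N K : ℕ} (hK : 1 ≤ K) (hKN : K ≤ N) (p : ℝ) :
    HasDerivAt (fun p : ℝ => ∑ m ∈ Finset.Ico K (N + 1), N.choose m * (p ^ m * (1 - p) ^ (N - m)))
      (K * N.choose K * (p ^ (K - 1) * (1 - p) ^ (N - K))) p := by
  obtain ⟨k, rfl⟩ : ∃ k, K = k + 1 := ⟨K - 1, by omega⟩
  obtain ⟨n, rfl⟩ : ∃ n, N = n + 1 := ⟨N - 1, by omega⟩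
  have hev : ∀ n m : ℕ, ∀ p : ℝ, (bernsteinPolynomial ℝ n m).eval p
      = n.choose m * (p ^ m * (1 - p) ^ (n - m)) := by
    intro n m p
    simp [bernsteinPolynomial, mul_assoc]
  have h := (∑ m ∈ Finset.Ico k (n + 1),
    bernsteinPolynomial ℝ (n + 1) (m + 1)).hasDerivAt p
  have htel : (∑ m ∈ Finset.Ico k (n + 1), ((bernsteinPolynomial ℝ n m).eval p
      - (bernsteinPolynomial ℝ n (m + 1)).eval p)) = (bernsteinPolynomial ℝ n k).eval p := by
    have h0 : (bernsteinPolynomial ℝ n (n + 1)).eval p = 0 := by simp [hev]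
    rw [← neg_inj, ← Finset.sum_neg_distrib]
    simp only [neg_sub]
    rw [Finset.sum_Ico_sub (fun m => (bernsteinPolynomial ℝ n m).eval p) (by omega), h0]
    simp
  refine (h.congr_deriv ?_).congr_of_eventuallyEq (Eventually.of_forall fun q => ?_)
  rotate_left
  · simp only [Polynomial.eval_finsetSum, hev]
    rw [Finset.sum_Ico_add' (fun m => ((n + 1).choose m : ℝ) * (q ^ m * (1 - q) ^ (n + 1 - m)))]
  · simp only [Polynomial.derivative_sum, bernsteinPolynomial.derivative_succ,
      Polynomial.eval_finsetSum, Polynomial.eval_mul, Polynomial.eval_sub, ← Finset.mul_sum,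
      Nat.add_sub_cancel]
    rw [htel, hev]
    have h' : ((n : ℝ) + 1) * n.choose k = (n + 1).choose (k + 1) * (k + 1) := by
      exact_mod_cast Nat.add_one_mul_choose_eq n k
    simp only [Polynomial.eval_natCast]
    push_cast
    rw [← mul_assoc, h']
    ring

theorem hasDerivAt_exp_neg_mul_sub (l c t : ℝ) :
    HasDerivAt (fun t : ℝ => Real.exp (-l * (t - c))) (-l * Real.exp (-l * (t - c))) t := by
  have h := (((hasDerivAt_id t).sub_const c).const_mul (-l)).exp
  simp only [id_eq, mul_one] at h
  rwa [mul_comm] at h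

theorem tendsto_mul_sub_atTop {l : ℝ} (c : ℝ) (hl : 0 < l) :
    Tendsto (fun t : ℝ => l * (t - c)) atTop atTop :=
  (tendsto_atTop_add_const_right atTop (-c) tendsto_id).const_mul_atTop hl

theorem tendsto_exp_neg_mul_sub {l : ℝ} (c : ℝ) (hl : 0 < l) :
    Tendsto (fun t : ℝ => Real.exp (-l * (t - c))) atTop (𝓝 0) := by
  refine (Real.tendsto_exp_neg_atTop_nhds_zero.comp (tendsto_mul_sub_atTop c hl)).congr
    fun t => ?_
  simp [neg_mul]

theorem shiftedExp_Ici {l c y : ℝ} (hl : 0 < l) (hy : c ≤ y) :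
    shiftedExp l c (Ici y) = ENNReal.ofReal (Real.exp (-l * (y - c))) := by
  have hd : ∀ t ∈ Ici y, HasDerivAt (fun t : ℝ => -Real.exp (-l * (t - c)))
      (l * Real.exp (-l * (t - c))) t := fun t _ =>
    (hasDerivAt_exp_neg_mul_sub l c t).fun_neg.congr_deriv (by ring)
  have hlim : Tendsto (fun t : ℝ => -Real.exp (-l * (t - c))) atTop (𝓝 0) := by
    simpa using (tendsto_exp_neg_mul_sub c hl).neg
  have hint := integrableOn_Ioi_deriv_of_nonneg' hd (fun t _ => by positivity) hlim
  have hval := integral_Ioi_of_hasDerivAt_of_tendsto' hd hint hlim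
  rw [shiftedExp, withDensity_apply _ measurableSet_Ici, setLIntegral_congr Ioi_ae_eq_Ici.symm,
    setLIntegral_congr_fun measurableSet_Ioi
      (g := fun t => ENNReal.ofReal (l * Real.exp (-l * (t - c))))
      (fun t ht => by simp [lt_of_le_of_lt hy ht]),
    ← ofReal_integral_eq_lintegral_ofReal hint
      (Eventually.of_forall fun t => by simp only [Pi.zero_apply]; positivity), hval]
  simp

theorem shiftedExp_Iic_of_le {l c x : ℝ} (hx : x ≤ c) : shiftedExp l c (Iic x) = 0 := by
  rw [shiftedExp, withDensity_apply _ measurableSet_Iic,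
    setLIntegral_congr_fun measurableSet_Iic (g := fun _ => 0)
      (fun t ht => by simp [not_lt.2 (le_trans ht hx)])]
  simp

theorem isProbabilityMeasure_shiftedExp {l c : ℝ} (hl : 0 < l) :
    IsProbabilityMeasure (shiftedExp l c) := by
  constructor
  have h1 : shiftedExp l c (Iio c) = 0 :=
    measure_mono_null Iio_subset_Iic_self (shiftedExp_Iic_of_le le_rfl)
  rw [← Iio_union_Ici (a := c), measure_union (Iio_disjoint_Ici le_rfl) measurableSet_Ici, h1,
    shiftedExp_Ici hl le_rfl]
  simp

theorem shiftedExp_Ioi {l c x : ℝ} (hl : 0 < l) (hx : c ≤ x) :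
    shiftedExp l c (Ioi x) = ENNReal.ofReal (Real.exp (-l * (x - c))) := by
  rw [← shiftedExp_Ici hl hx]
  exact measure_congr ((withDensity_absolutelyContinuous _ _).ae_eq Ioi_ae_eq_Ici)

theorem shiftedExp_Iic {l c x : ℝ} (hl : 0 < l) (hx : c ≤ x) :
    shiftedExp l c (Iic x) = ENNReal.ofReal (1 - Real.exp (-l * (x - c))) := by
  have := isProbabilityMeasure_shiftedExp (c := c) hl
  rw [← compl_Ioi, prob_compl_eq_one_sub measurableSet_Ioi, shiftedExp_Ioi hl hx,
    ENNReal.ofReal_sub _ (Real.exp_nonneg _), ENNReal.ofReal_one]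

/-- The (unconditional) density of the `K`-th order statistic on `(c, ∞)`. -/
noncomputable def orderStatDensity (N K : ℕ) (l c t : ℝ) : ℝ :=
  K * N.choose K * ((1 - Real.exp (-l * (t - c))) ^ (K - 1) * Real.exp (-l * (t - c)) ^ (N - K))
    * (l * Real.exp (-l * (t - c)))

theorem continuous_orderStatDensity (N K : ℕ) (l c : ℝ) :
    Continuous (orderStatDensity N K l c) := by
  unfold orderStatDensity
  fun_prop

theorem exp_neg_mul_sub_le_one {l c t : ℝ} (hl : 0 < l) (ht : c ≤ t) :
    Real.exp (-l * (t - c)) ≤ 1 :=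
  Real.exp_le_one_iff.2 (by nlinarith)

theorem orderStatDensity_nonneg (N K : ℕ) {l c t : ℝ} (hl : 0 < l) (ht : c ≤ t) :
    0 ≤ orderStatDensity N K l c t := by
  have := sub_nonneg.2 (exp_neg_mul_sub_le_one hl ht)
  unfold orderStatDensity
  positivity

theorem measurable_orderStat_eval {N K : ℕ} (hK : 1 ≤ K) (hKN : K ≤ N) :
    Measurable (orderStat (fun (i : Fin N) (f : Fin N → ℝ) => f i) K) := by
  refine measurable_of_Iic fun x => ?_
  convert measurableSet_le_card_mem (N := N) K (measurableSet_Iic (a := x)) using 1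
  ext f
  exact orderStat_le_iff _ hK hKN f x

theorem map_orderStat_pi_shiftedExp {N K : ℕ} (hK : 1 ≤ K) (hKN : K ≤ N) {l c : ℝ} (hl : 0 < l) :
    Measure.map (orderStat (fun (i : Fin N) (f : Fin N → ℝ) => f i) K)
        (Measure.pi fun _ : Fin N => shiftedExp l c)
      = volume.withDensity
          (fun t => ENNReal.ofReal (if c < t then orderStatDensity N K l c t else 0)) := by
  have := isProbabilityMeasure_shiftedExp (c := c) hl
  have hmeas := measurable_orderStat_eval hK hKN
  have := Measure.isProbabilityMeasure_map
    (μ := Measure.pi fun _ : Fin N => shiftedExp l c) hmeas.aemeasurable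
  refine Measure.ext_of_Iic _ _ fun x => ?_
  have hpre : orderStat (fun (i : Fin N) (f : Fin N → ℝ) => f i) K ⁻¹' Iic x
      = {f : Fin N → ℝ | K ≤ Nat.card {i // f i ∈ Iic x}} := by
    ext f
    exact orderStat_le_iff _ hK hKN f x
  rw [Measure.map_apply hmeas measurableSet_Iic, hpre, pi_le_card_mem K _ measurableSet_Iic,
    compl_Iic, withDensity_apply _ measurableSet_Iic]
  rcases le_or_gt x c with hx | hx
  · rw [shiftedExp_Iic_of_le hx, setLIntegral_congr_fun measurableSet_Iic (g := fun _ => 0)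
      (fun t ht => by simp [not_lt.2 (le_trans ht hx)]), lintegral_zero]
    refine Finset.sum_eq_zero fun m hm => ?_
    have : m ≠ 0 := by have := (Finset.mem_Ico.1 hm).1; omega
    simp [this]
  · set F : ℝ → ℝ := fun p =>
      ∑ m ∈ Finset.Ico K (N + 1), N.choose m * (p ^ m * (1 - p) ^ (N - m)) with hF
    have hderiv : ∀ t, HasDerivAt (fun t => F (1 - Real.exp (-l * (t - c))))
        (orderStatDensity N K l c t) t := fun t => by
      have h := (hasDerivAt_binomial_tail hK hKN (1 - Real.exp (-l * (t - c)))).comp t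
        ((hasDerivAt_exp_neg_mul_sub l c t).const_sub 1)
      refine h.congr_deriv ?_
      simp only [orderStatDensity, sub_sub_cancel]
      ring
    have hint := intervalIntegral.integral_eq_sub_of_hasDerivAt (a := c) (b := x)
      (fun t _ => hderiv t) ((continuous_orderStatDensity N K l c).intervalIntegrable c x)
    have hF0 : F 0 = 0 := Finset.sum_eq_zero fun m hm => by
      have : m ≠ 0 := by have := (Finset.mem_Ico.1 hm).1; omega
      simp [this]
    have hp := sub_nonneg.2 (exp_neg_mul_sub_le_one hl hx.le)
    have hsum : ∑ m ∈ Finset.Ico K (N + 1), (N.choose m : ENNReal) *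
        (shiftedExp l c (Iic x) ^ m * shiftedExp l c (Ioi x) ^ (N - m))
        = ENNReal.ofReal (F (1 - Real.exp (-l * (x - c)))) := by
      rw [hF, ENNReal.ofReal_sum_of_nonneg]
      · refine Finset.sum_congr rfl fun m _ => ?_
        rw [shiftedExp_Iic hl hx.le, shiftedExp_Ioi hl hx.le, sub_sub_cancel,
          ENNReal.ofReal_mul (by positivity), ENNReal.ofReal_mul (by positivity),
          ENNReal.ofReal_pow hp, ENNReal.ofReal_pow (by positivity), ENNReal.ofReal_natCast]
      · intro m _
        rw [sub_sub_cancel]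
        positivity
    have hIoc : ∫⁻ t in Iic x, ENNReal.ofReal (if c < t then orderStatDensity N K l c t else 0)
        = ∫⁻ t in Ioc c x, ENNReal.ofReal (orderStatDensity N K l c t) := by
      rw [← lintegral_indicator measurableSet_Iic, ← lintegral_indicator measurableSet_Ioc]
      congr 1
      ext t
      by_cases h1 : c < t <;> by_cases h2 : t ≤ x <;> simp [indicator, h1, h2]
    rw [hsum, hIoc, ← ofReal_integral_eq_lintegral_ofReal
      ((continuous_orderStatDensity N K l c).integrableOn_Ioc),
      ← intervalIntegral.integral_of_le hx.le, hint]
    · simp [hF0]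
    · exact (ae_restrict_iff' measurableSet_Ioc).2
        (Eventually.of_forall fun t ht => orderStatDensity_nonneg N K hl ht.1.le)

theorem sum_exp_eq_orderStatDensity_mul_exp {N K : ℕ} (hK : 1 ≤ K) (hKN : K ≤ N)
    (l d c t : ℝ) :
    ∑ j ∈ Finset.range K, (K * N.choose K * (K - 1).choose j * (-1) ^ j) * l
        * Real.exp (-(l * ((N : ℝ) - K + 1 + j) + d) * (t - c))
      = orderStatDensity N K l c t * Real.exp (-d * (t - c)) := by
  have hexp : ∀ j : ℕ, Real.exp (-(l * ((N : ℝ) - K + 1 + j) + d) * (t - c))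
      = Real.exp (-l * (t - c)) ^ (N - K) * Real.exp (-l * (t - c))
        * Real.exp (-l * (t - c)) ^ j * Real.exp (-d * (t - c)) := by
    intro j
    rw [← Real.exp_nat_mul, ← Real.exp_nat_mul, ← Real.exp_add, ← Real.exp_add, ← Real.exp_add,
      Nat.cast_sub hKN]
    congr 1
    ring
  simp_rw [hexp, orderStatDensity]
  generalize Real.exp (-l * (t - c)) = e
  have hpow : (1 - e) ^ (K - 1)
      = ∑ j ∈ Finset.range K, (K - 1).choose j * (-1) ^ j * e ^ j := by
    rw [sub_eq_neg_add, add_pow, Nat.sub_add_cancel hK]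
    refine Finset.sum_congr rfl fun j _ => ?_
    rw [neg_pow]
    ring
  rw [hpow]
  simp only [Finset.sum_mul, Finset.mul_sum]
  exact Finset.sum_congr rfl fun j _ => by ring

theorem integrableOn_mul_exp_and_integral {h c : ℝ} (hh : 0 < h) (hc : 0 ≤ c) :
    IntegrableOn (fun t : ℝ => t * Real.exp (-h * (t - c))) (Ioi c) ∧
      ∫ t in Ioi c, t * Real.exp (-h * (t - c)) = (c * h + 1) / h ^ 2 := by
  have hd : ∀ t ∈ Ici c, HasDerivAt (fun t : ℝ => -((t / h + 1 / h ^ 2) * Real.exp (-h * (t - c))))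
      (t * Real.exp (-h * (t - c))) t := fun t _ => by
    refine ((((hasDerivAt_id t).div_const h).add_const (1 / h ^ 2)).fun_mul
      (hasDerivAt_exp_neg_mul_sub h c t)).fun_neg.congr_deriv ?_
    simp only [id_eq]
    field_simp
    ring
  have hlim : Tendsto (fun t : ℝ => -((t / h + 1 / h ^ 2) * Real.exp (-h * (t - c))))
      atTop (𝓝 0) := by
    have h1 := (Real.tendsto_pow_mul_exp_neg_atTop_nhds_zero 1).comp (tendsto_mul_sub_atTop c hh)
    have h2 := ((h1.const_mul (1 / h ^ 2)).add
      ((tendsto_exp_neg_mul_sub c hh).const_mul (c / h + 1 / h ^ 2))).neg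
    simp only [mul_zero, add_zero, neg_zero] at h2
    refine h2.congr fun t => ?_
    simp only [Function.comp, pow_one, neg_mul]
    field_simp
    ring
  have hint := integrableOn_Ioi_deriv_of_nonneg' hd
    (fun t ht => mul_nonneg (hc.trans (le_of_lt ht)) (Real.exp_nonneg _)) hlim
  refine ⟨hint, ?_⟩
  rw [integral_Ioi_of_hasDerivAt_of_tendsto' hd hint hlim]
  simp
  field_simp

/-- If `X ~ μ` and `Y ~ ν` are independent, the law of `Y` restricted to `{Y ≤ X}` has density
`y ↦ μ [y, ∞)` with respect to `ν`. -/
theorem map_restrict_le_of_map_prod {Ω : Type*} [MeasurableSpace Ω] {P : Measure Ω}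
    {μ ν : Measure ℝ} [SFinite μ] [SFinite ν] {X Y : Ω → ℝ} (hX : Measurable X)
    (hY : Measurable Y) (h : Measure.map (fun ω => (X ω, Y ω)) P = μ.prod ν) :
    Measure.map Y (P.restrict {ω | Y ω ≤ X ω}) = ν.withDensity fun y => μ (Ici y) := by
  ext A hA
  have hE : MeasurableSet {p : ℝ × ℝ | p.2 ≤ p.1} := measurableSet_le measurable_snd measurable_fst
  have hS : MeasurableSet ({p : ℝ × ℝ | p.2 ≤ p.1} ∩ Prod.snd ⁻¹' A) :=
    hE.inter (measurable_snd hA)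
  rw [Measure.map_apply hY hA, Measure.restrict_apply (hY hA), withDensity_apply _ hA]
  have : Y ⁻¹' A ∩ {ω | Y ω ≤ X ω}
      = (fun ω => (X ω, Y ω)) ⁻¹' ({p : ℝ × ℝ | p.2 ≤ p.1} ∩ Prod.snd ⁻¹' A) := by
    ext ω
    simp [and_comm]
  rw [this, ← Measure.map_apply (hX.prodMk hY) hS, h, Measure.prod_apply_symm hS,
    ← lintegral_indicator hA]
  congr 1
  ext y
  by_cases hy : y ∈ A
  · simp only [hy, indicator_of_mem]
    congr 1
    ext x
    simp [hy]
  · have : (fun x : ℝ => (x, y)) ⁻¹' ({p : ℝ × ℝ | p.2 ≤ p.1} ∩ Prod.snd ⁻¹' A) = ∅ := by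
      ext x
      simp [hy]
    rw [this]
    simp [hy]

theorem measurable_measure_Ici (μ : Measure ℝ) : Measurable fun y => μ (Ici y) :=
  Antitone.measurable fun _ _ h => measure_mono (Ici_subset_Ici.2 h)

end

theorem cond_density_and_first_moment_orderStat_random_deadline
    {Ω : Type*} [MeasurableSpace Ω] (P : MeasureTheory.Measure Ω) [IsProbabilityMeasure P]
    (N K : ℕ) (hK : 1 ≤ K) (hKN : K ≤ N)
    (ls ld c : ℝ) (hls : 0 < ls) (hld : 0 < ld) (hc : 0 ≤ c)
    (T : Fin N → Ω → ℝ) (hT : ∀ i, Measurable (T i))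
    (D : Ω → ℝ) (hD : Measurable D)
    (hlaw : MeasureTheory.Measure.map (fun ω => (D ω, fun i => T i ω)) P
      = (shiftedExp ld c).prod (MeasureTheory.Measure.pi (fun _ : Fin N => shiftedExp ls c)))
    (B : ℕ → ℝ) (hB : ∀ j, B j = (K : ℝ) * (N.choose K : ℝ) * ((K - 1).choose j : ℝ) * (-1) ^ j)
    (H : ℕ → ℝ) (hH : ∀ j, H j = ls * ((N : ℝ) - K + 1 + j) + ld)
    (R : ℝ) (hR : R = (P {ω | orderStat T K ω ≤ D ω}).toReal) :
    MeasureTheory.Measure.map (orderStat T K) (P[|{ω | orderStat T K ω ≤ D ω}])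
      = MeasureTheory.volume.withDensity (fun t => ENNReal.ofReal
          (if c < t then (∑ j ∈ Finset.range K, B j * ls * Real.exp (-(H j) * (t - c))) / R
           else 0)) ∧
    (∫ ω, orderStat T K ω ∂(P[|{ω | orderStat T K ω ≤ D ω}]))
      = (1 / R) * ∑ j ∈ Finset.range K, B j * ls * (c * H j + 1) / (H j) ^ 2 := by
  have hprobD := isProbabilityMeasure_shiftedExp (c := c) hld
  have hprobS := isProbabilityMeasure_shiftedExp (c := c) hls
  set g := orderStat (fun (i : Fin N) (f : Fin N → ℝ) => f i) K with hg
  have hgm : Measurable g := measurable_orderStat_eval hK hKN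
  have hYeq : orderStat T K = fun ω => g fun i => T i ω := rfl
  have hY : Measurable (orderStat T K) := by
    rw [hYeq]
    exact hgm.comp (measurable_pi_lambda _ hT)
  set S : ℝ → ℝ := fun t => ∑ j ∈ Finset.range K, B j * ls * Real.exp (-(H j) * (t - c)) with hS
  have hSeq : ∀ t, S t = orderStatDensity N K ls c t * Real.exp (-ld * (t - c)) := fun t => by
    rw [← sum_exp_eq_orderStatDensity_mul_exp hK hKN]
    simp only [hS, hB, hH]
  have hjoint : Measure.map (fun ω => (D ω, orderStat T K ω)) P
      = (shiftedExp ld c).prod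
          (Measure.map g (Measure.pi fun _ : Fin N => shiftedExp ls c)) := by
    have h1 := Measure.map_prod_map (shiftedExp ld c)
      (Measure.pi fun _ : Fin N => shiftedExp ls c) measurable_id hgm
    rw [Measure.map_id] at h1
    rw [h1, ← hlaw, Measure.map_map (measurable_id.prodMap hgm)
      (hD.prodMk (measurable_pi_lambda _ hT))]
    rfl
  have hSm : Measurable S := by fun_prop
  have hdm : Measurable fun t => ENNReal.ofReal (if c < t then S t / R else 0) :=
    (Measurable.ite measurableSet_Ioi (hSm.div_const R) measurable_const).ennreal_ofReal
  have hsub : Measure.map (orderStat T K) (P.restrict {ω | orderStat T K ω ≤ D ω})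
      = volume.withDensity fun t => ENNReal.ofReal (if c < t then S t else 0) := by
    rw [map_restrict_le_of_map_prod hD hY hjoint, map_orderStat_pi_shiftedExp hK hKN hls,
      ← withDensity_mul _ _ (measurable_measure_Ici _)]
    · congr 1
      ext t
      simp only [Pi.mul_apply]
      split_ifs with ht
      · rw [shiftedExp_Ici hld ht.le, hSeq,
          ENNReal.ofReal_mul (orderStatDensity_nonneg N K hls ht.le)]
      · simp
    · exact (Measurable.ite measurableSet_Ioi (continuous_orderStatDensity N K ls c).measurable
        measurable_const).ennreal_ofReal
  have hmap : Measure.map (orderStat T K) (P[|{ω | orderStat T K ω ≤ D ω}])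
      = volume.withDensity fun t => ENNReal.ofReal (if c < t then S t / R else 0) := by
    rcases eq_or_ne (P {ω | orderStat T K ω ≤ D ω}) 0 with h0 | h0
    · have hR0 : R = 0 := by rw [hR, h0, ENNReal.toReal_zero]
      rw [ProbabilityTheory.cond, Measure.restrict_eq_zero.2 h0]
      simp [hR0]
    · have hRpos : 0 < R := by
        rw [hR]
        exact ENNReal.toReal_pos h0 (measure_ne_top _ _)
      have hPR : P {ω | orderStat T K ω ≤ D ω} = ENNReal.ofReal R := by
        rw [hR, ENNReal.ofReal_toReal (measure_ne_top _ _)]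
      rw [ProbabilityTheory.cond, Measure.map_smul, hsub, hPR, ← withDensity_smul]
      · congr 1
        ext t
        simp only [Pi.smul_apply, smul_eq_mul]
        rw [← ENNReal.ofReal_inv_of_pos hRpos, ← ENNReal.ofReal_mul (by positivity)]
        congr 1
        split_ifs
        · ring
        · simp
      · exact (Measurable.ite measurableSet_Ioi hSm measurable_const).ennreal_ofReal
  refine ⟨hmap, ?_⟩
  have hHpos : ∀ j, 0 < H j := fun j => by
    have : (K : ℝ) ≤ N := by exact_mod_cast hKN
    have : 0 < (N : ℝ) - K + 1 + j := by
      have : (0 : ℝ) ≤ j := j.cast_nonneg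
      linarith
    rw [hH]
    positivity
  have hR0 : 0 ≤ R := by
    rw [hR]
    exact ENNReal.toReal_nonneg
  have h1 : ∫ ω, orderStat T K ω ∂(P[|{ω | orderStat T K ω ≤ D ω}])
      = ∫ t, t ∂(Measure.map (orderStat T K) (P[|{ω | orderStat T K ω ≤ D ω}])) :=
    (integral_map hY.aemeasurable measurable_id.aestronglyMeasurable).symm
  rw [h1, hmap, integral_withDensity_eq_integral_toReal_smul hdm
    (Filter.Eventually.of_forall fun _ => ENNReal.ofReal_lt_top)]
  have h2 : ∀ t, (ENNReal.ofReal (if c < t then S t / R else 0)).toReal • t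
      = (Set.Ioi c).indicator (fun t => ∑ j ∈ Finset.range K,
          1 / R * (B j * ls) * (t * Real.exp (-(H j) * (t - c)))) t := fun t => by
    by_cases ht : c < t
    · have hS0 : 0 ≤ S t := by
        rw [hSeq]
        exact mul_nonneg (orderStatDensity_nonneg N K hls ht.le) (Real.exp_nonneg _)
      rw [if_pos ht, ENNReal.toReal_ofReal (div_nonneg hS0 hR0),
        Set.indicator_of_mem (Set.mem_Ioi.2 ht)]
      simp only [hS, smul_eq_mul, Finset.sum_div, Finset.sum_mul]
      exact Finset.sum_congr rfl fun j _ => by ring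
    · simp [ht]
  simp_rw [h2]
  rw [integral_indicator measurableSet_Ioi, integral_finsetSum _ fun j _ =>
    (integrableOn_mul_exp_and_integral (hHpos j) hc).1.const_mul _, Finset.mul_sum]
  refine Finset.sum_congr rfl fun j _ => ?_
  rw [integral_const_mul, (integrableOn_mul_exp_and_integral (hHpos j) hc).2]
  ring
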